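/- Let k be a field, k₀ the 1-dimensional abelian Poisson algebra (zero multiplication and bracket) and k₁ the 1-dimensional Poisson algebra with unital multiplication 1·1 = 1 and zero bracket. Then GPH²(k₀, k) is in bijection with k* ⊔ k ⊔ k* and GPH²(k₁, k) is in bijection with {*} ⊔ {*} ⊔ k ⊔ k ⊔ k*. Explicitly, every 2-dimensional co-flag Poisson algebra over k is cohomologous to exactly one of the following Poisson algebras with basis {e₁,e₂}: k²_{0,δ} with e₁⋆e₁ = δe₂ (δ ∈ k*); ₘk²₀ with {e₁,e₂} = μe₂ (μ ∈ k); k²_{0,u} with e₂⋆e₂ = ue₂ (u ∈ k*); k²₁ with e₁⋆e₁ = e₁; k̄²₁ with e₁⋆e₁ = e₁, e₁⋆e₂ = e₂⋆e₁ = e₂; ₘk²₁ with e₁⋆e₁ = e₁, e₁⋆e₂ = e₂, {e₁,e₂} = μe₂ (μ ∈ k); ₘk̄²₁ with e₁⋆e₁ = e₁, e₂⋆e₁ = e₂, {e₁,e₂} = μe₂ (μ ∈ k); and k²_u with e₁⋆e₁ = e₁, e₂⋆e₂ = ue₂ (u ∈ k*); all unlisted products and brackets of basis vectors are zero. -/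

import Mathlib

/-!
Fix `P = k` with product `ε p q`, where `ε = 0` for `k₀` and `ε = 1` for `k₁`, and zero bracket.
A bilinear product on `k × k` lying over `P`, together with an alternating bracket lying over
zero, is given by five scalars:
`e₁⋆e₁ = ε e₁ + θ e₂`, `e₁⋆e₂ = a e₂`, `e₂⋆e₁ = b e₂`, `e₂⋆e₂ = u e₂`, `{e₁,e₂} = μ e₂`
(`stdStr`, `exists_eq_stdStr`). Associativity and the Leibniz law become polynomial equations in
these scalars (`isPoisson_stdStr`); the Jacobi identity is automatic.

An isomorphism stabilizing `k` and co-stabilizing `P` is a shear `(p, x) ↦ (p, x + r p)`, so two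
structures are cohomologous exactly when some `r` relates their scalars (`cohomE_stdStr`). In
particular `u` and `μ` are invariants. If `u ≠ 0`, then `μ = 0` and the shear with `r = a / u`
kills `a`, `b`, `θ`. If `u = 0`, then `a` and `b` are invariants too, with `a² = ε a` and
`b² = ε b`. For `ε = 0` this forces `a = b = 0`, the scalar `θ` is invariant, and `θ μ = 0`.
For `ε = 1` it gives `a, b ∈ {0, 1}`: when `a = b`, then `μ = 0` and a shear kills `θ`; when
`a ≠ b`, then `θ = 0` and `μ` is free. These cases are the listed models.

The bijections with the index sets follow because cohomology is an equivalence relation and the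
models form a complete set of representatives (`quot_equiv_of_representatives`).
-/

universe u

section Defs

variable (k : Type u) [Field k]

/-- A map in two variables is `k`-bilinear. -/
def IsBilin {A B C : Type u} [AddCommGroup A] [Module k A] [AddCommGroup B] [Module k B]
    [AddCommGroup C] [Module k C] (f : A → B → C) : Prop :=
  (∀ a a' b, f (a + a') b = f a b + f a' b) ∧
  (∀ (c : k) (a b), f (c • a) b = c • f a b) ∧
  (∀ a b b', f a (b + b') = f a b + f a b') ∧
  (∀ (c : k) (a b), f a (c • b) = c • f a b)

/-- `(A, mul, br)` is a (not necessarily commutative or unital) Poisson algebra over `k`: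
`mul` is a bilinear associative multiplication, `br` is a Lie bracket and the
Leibniz law `[ab, c] = [a,c]b + a[b,c]` holds. -/
structure IsPoisson {A : Type u} [AddCommGroup A] [Module k A]
    (mul br : A → A → A) : Prop where
  mul_bilin : IsBilin k mul
  br_bilin : IsBilin k br
  mul_assoc : ∀ a b c, mul (mul a b) c = mul a (mul b c)
  br_alt : ∀ a, br a a = 0
  jacobi : ∀ a b c, br (br a b) c + br (br b c) a + br (br c a) b = 0
  leibniz : ∀ a b c, br (mul a b) c = mul (br a c) b + mul a (br b c)

variable (P V : Type u) [AddCommGroup P] [Module k P] [AddCommGroup V] [Module k V]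

/-- A pre-crossed datum `Ω(P,V) = (⇀, ◁, ϑ, ·_V, ▷, f, [-,-]_V)` of a Poisson algebra `P`
by a vector space `V`:  seven bilinear maps.  Here `hl = ⇀`, `hr = ◁`, `theta = ϑ`,
`mulV = ·_V`, `lact = ▷`, `cf = f` and `brV = [-,-]_V`. -/
structure PreCrossedDatum where
  hl : P → V → V
  hr : V → P → V
  theta : P → P → V
  mulV : V → V → V
  lact : P → V → V
  cf : P → P → V
  brV : V → V → V
  hl_bilin : IsBilin k hl
  hr_bilin : IsBilin k hr
  theta_bilin : IsBilin k theta
  mulV_bilin : IsBilin k mulV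
  lact_bilin : IsBilin k lact
  cf_bilin : IsBilin k cf
  brV_bilin : IsBilin k brV

variable {k P V}

/-- The multiplication `(p,x) ⋆ (q,y) = (pq, ϑ(p,q) + p⇀y + x◁q + x·y)` of `P ♯ V`. -/
def sharpMul (mulP : P → P → P) (Om : PreCrossedDatum k P V) :
    P × V → P × V → P × V :=
  fun a b => (mulP a.1 b.1,
    Om.theta a.1 b.1 + Om.hl a.1 b.2 + Om.hr a.2 b.1 + Om.mulV a.2 b.2)

/-- The bracket `{(p,x), (q,y)} = ([p,q], f(p,q) + p▷y − q▷x + [x,y]_V)` of `P ♯ V`. -/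
def sharpBr (brP : P → P → P) (Om : PreCrossedDatum k P V) :
    P × V → P × V → P × V :=
  fun a b => (brP a.1 b.1,
    Om.cf a.1 b.1 + Om.lact a.1 b.2 - Om.lact b.1 a.2 + Om.brV a.2 b.2)

/-- A pre-crossed datum is a crossed system when `P ♯ V` is a Poisson algebra. -/
def IsCrossedSystem (mulP brP : P → P → P) (Om : PreCrossedDatum k P V) : Prop :=
  IsPoisson k (sharpMul mulP Om) (sharpBr brP Om)

end Defs

section CohomE

variable {k P : Type u} [Field k] [AddCommGroup P] [Module k P]

/-- Two Poisson algebra structures on `E = P × k` are cohomologous: there is a Poisson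
algebra isomorphism between them that stabilizes `V = 0 × k` and co-stabilizes `P`. -/
def CohomE (s t : ((P × k → P × k → P × k) × (P × k → P × k → P × k))) : Prop :=
  ∃ φ : (P × k) ≃ₗ[k] P × k,
    (∀ a b, φ (s.1 a b) = t.1 (φ a) (φ b)) ∧
    (∀ a b, φ (s.2 a b) = t.2 (φ a) (φ b)) ∧
    (∀ c : k, φ ((0 : P), c) = ((0 : P), c)) ∧
    (∀ a, (φ a).1 = a.1)

/-- The Poisson algebra structures on `E = P × k` for which the canonical projection onto
`(P, mulP, brP)` is a morphism of Poisson algebras. -/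
def CompatE (mulP brP : P → P → P)
    (s : ((P × k → P × k → P × k) × (P × k → P × k → P × k))) : Prop :=
  IsPoisson k s.1 s.2 ∧
  (∀ a b, (s.1 a b).1 = mulP a.1 b.1) ∧
  (∀ a b, (s.2 a b).1 = brP a.1 b.1)

end CohomE

section Statement

variable (k : Type u) [Field k]

/-- Indexing set `k* ⊔ k ⊔ k*` for the co-flag algebras over `k₀`. -/
def I17a : Type u := {c : k // c ≠ 0} ⊕ k ⊕ {c : k // c ≠ 0}

/-- Indexing set `{*} ⊔ {*} ⊔ k ⊔ k ⊔ k*` for the co-flag algebras over `k₁`. -/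
def I17b : Type u := PUnit.{u+1} ⊕ PUnit.{u+1} ⊕ k ⊕ k ⊕ {c : k // c ≠ 0}

/-- The representatives of the `2`-dimensional co-flag Poisson algebras over the abelian
Poisson algebra `k₀`, on the space `k × k` with basis `e₁ = (1,0)`, `e₂ = (0,1)`:
`k²_{0,δ}`, `ₘk²₀` and `k²_{0,u}`. -/
def model17a : I17a k → ((k × k → k × k → k × k) × (k × k → k × k → k × k))
  -- k²_{0,δ} : e₁⋆e₁ = δ e₂
  | Sum.inl d => (fun u v => (0, d.1 * (u.1 * v.1)), fun _ _ => 0)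
  -- ₘk²₀ : {e₁,e₂} = μ e₂
  | Sum.inr (Sum.inl m) => (fun _ _ => 0, fun u v => (0, m * (u.1 * v.2 - v.1 * u.2)))
  -- k²_{0,u} : e₂⋆e₂ = u e₂
  | Sum.inr (Sum.inr d) => (fun u v => (0, d.1 * (u.2 * v.2)), fun _ _ => 0)

/-- The representatives of the `2`-dimensional co-flag Poisson algebras over the unital
`1`-dimensional Poisson algebra `k₁`: `k²₁`, `k̄²₁`, `ₘk²₁`, `ₘk̄²₁` and `k²_u`. -/
def model17b : I17b k → ((k × k → k × k → k × k) × (k × k → k × k → k × k))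
  -- k²₁ : e₁⋆e₁ = e₁
  | Sum.inl _ => (fun u v => (u.1 * v.1, 0), fun _ _ => 0)
  -- k̄²₁ : e₁⋆e₁ = e₁, e₁⋆e₂ = e₂⋆e₁ = e₂
  | Sum.inr (Sum.inl _) =>
      (fun u v => (u.1 * v.1, u.1 * v.2 + u.2 * v.1), fun _ _ => 0)
  -- ₘk²₁ : e₁⋆e₁ = e₁, e₁⋆e₂ = e₂, {e₁,e₂} = μ e₂
  | Sum.inr (Sum.inr (Sum.inl m)) =>
      (fun u v => (u.1 * v.1, u.1 * v.2),
       fun u v => (0, m * (u.1 * v.2 - v.1 * u.2)))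
  -- ₘk̄²₁ : e₁⋆e₁ = e₁, e₂⋆e₁ = e₂, {e₁,e₂} = μ e₂
  | Sum.inr (Sum.inr (Sum.inr (Sum.inl m))) =>
      (fun u v => (u.1 * v.1, u.2 * v.1),
       fun u v => (0, m * (u.1 * v.2 - v.1 * u.2)))
  -- k²_u : e₁⋆e₁ = e₁, e₂⋆e₂ = u e₂
  | Sum.inr (Sum.inr (Sum.inr (Sum.inr d))) =>
      (fun u v => (u.1 * v.1, d.1 * (u.2 * v.2)), fun _ _ => 0)

section Std

variable {k}

/-- The pair (product, bracket) on `k × k` with `e₁⋆e₁ = ε e₁ + θ e₂`, `e₁⋆e₂ = a e₂`,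
`e₂⋆e₁ = b e₂`, `e₂⋆e₂ = u e₂` and `{e₁,e₂} = μ e₂`, where `e₁ = (1,0)` and `e₂ = (0,1)`. -/
def stdStr (ε θ a b u μ : k) : (k × k → k × k → k × k) × (k × k → k × k → k × k) :=
  (fun v w => (ε * (v.1 * w.1),
      θ * (v.1 * w.1) + a * (v.1 * w.2) + b * (v.2 * w.1) + u * (v.2 * w.2)),
   fun v w => (0, μ * (v.1 * w.2 - w.1 * v.2)))

theorem isBilin_expand {f : k × k → k × k → k × k} (hf : IsBilin k f) (v w : k × k) :
    f v w = (v.1 * w.1) • f (1, 0) (1, 0) + (v.1 * w.2) • f (1, 0) (0, 1)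
      + (v.2 * w.1) • f (0, 1) (1, 0) + (v.2 * w.2) • f (0, 1) (0, 1) := by
  obtain ⟨h1, h2, h3, h4⟩ := hf
  have e : ∀ v : k × k, v = v.1 • ((1, 0) : k × k) + v.2 • ((0, 1) : k × k) := by
    intro v; ext <;> simp
  conv_lhs => rw [e v, e w]
  simp only [h1, h2, h3, h4, smul_add, smul_smul]
  abel

/-- Associativity and the Leibniz law for `stdStr`, in terms of the structure constants. -/
theorem isPoisson_stdStr (ε θ a b u μ : k) :
    IsPoisson k (stdStr ε θ a b u μ).1 (stdStr ε θ a b u μ).2 ↔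
      θ * a = θ * b ∧ a * u = b * u ∧ ε * a + θ * u = a * a ∧ ε * b + θ * u = b * b ∧
      μ * ε = μ * (a + b) ∧ θ * μ = 0 ∧ u * μ = 0 := by
  constructor
  · intro h
    have A := h.mul_assoc
    have L := h.leibniz
    have a1 := congrArg Prod.snd (A (1, 0) (1, 0) (1, 0))
    have a2 := congrArg Prod.snd (A (0, 1) (1, 0) (0, 1))
    have a3 := congrArg Prod.snd (A (1, 0) (1, 0) (0, 1))
    have a4 := congrArg Prod.snd (A (0, 1) (1, 0) (1, 0))
    have l1 := congrArg Prod.snd (L (1, 0) (1, 0) (0, 1))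
    have l2 := congrArg Prod.snd (L (1, 0) (1, 0) (1, 0))
    have l3 := congrArg Prod.snd (L (0, 1) (0, 1) (1, 0))
    simp [stdStr] at a1 a2 a3 a4 l1 l2 l3
    refine ⟨?_, ?_, ?_, ?_, ?_, ?_, ?_⟩ <;> grind
  · rintro ⟨h1, h2, h3, h4, h5, h6, h7⟩
    constructor
    · refine ⟨?_, ?_, ?_, ?_⟩ <;> intros <;> ext <;> simp [stdStr] <;> ring
    · refine ⟨?_, ?_, ?_, ?_⟩ <;> intros <;> ext <;> simp [stdStr] <;> ring
    · intro x y z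
      ext
      · simp only [stdStr]; ring
      · simp only [stdStr]
        linear_combination (-x.1 * y.1 * z.1) * h1 - (x.2 * y.1 * z.2) * h2
          + (x.1 * y.1 * z.2) * h3 - (x.2 * y.1 * z.1) * h4
    · intro x
      ext <;> simp [stdStr, mul_comm]
    · intro x y z
      ext <;> simp [stdStr]; ring
    · intro x y z
      ext
      · simp [stdStr]
      · simp [stdStr]
        linear_combination (x.1 * y.1 * z.2) * h5 - (x.1 * y.1 * z.1) * h6
          + (x.2 * y.2 * z.1 - x.1 * y.2 * z.2 - x.2 * y.1 * z.2) * h7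

/-- Every Poisson structure over `(k, ε p q, 0)` has the form `stdStr`. -/
theorem exists_eq_stdStr (ε : k) (s : (k × k → k × k → k × k) × (k × k → k × k → k × k))
    (hs : CompatE (k := k) (fun p q : k => ε * (p * q)) (fun _ _ : k => (0 : k)) s) :
    ∃ θ a b u μ : k, s = stdStr ε θ a b u μ := by
  obtain ⟨m, br⟩ := s
  obtain ⟨hP, hm, hb⟩ := hs
  refine ⟨(m (1, 0) (1, 0)).2, (m (1, 0) (0, 1)).2, (m (0, 1) (1, 0)).2, (m (0, 1) (0, 1)).2,
    (br (1, 0) (0, 1)).2, ?_⟩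
  simp only at hP hm hb
  have e11 := hP.br_alt (1, 0)
  have e22 := hP.br_alt (0, 1)
  -- Skew-symmetry on the basis is polarization of `{e₁ + e₂, e₁ + e₂} = 0`.
  have e12 := hP.br_alt (1, 1)
  rw [isBilin_expand hP.br_bilin, e11, e22] at e12
  have e21 : br (0, 1) (1, 0) = - br (1, 0) (0, 1) := by
    rw [eq_neg_iff_add_eq_zero, add_comm]; simpa using e12
  unfold stdStr
  congr 1
  · funext v w
    ext
    · simp [hm]
    · rw [isBilin_expand hP.mul_bilin v w]
      simp only [Prod.snd_add, Prod.smul_snd, smul_eq_mul]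
      ring
  · funext v w
    ext
    · simp [hb]
    · rw [isBilin_expand hP.br_bilin v w, e11, e22, e21]
      simp only [Prod.snd_add, Prod.smul_snd, smul_eq_mul, Prod.snd_neg, Prod.snd_zero]
      ring

/-- The shear `(p, x) ↦ (p, x + r p)`. -/
def shear (r : k) : (k × k) ≃ₗ[k] k × k where
  toFun v := (v.1, v.2 + r * v.1)
  invFun v := (v.1, v.2 - r * v.1)
  map_add' v w := by ext <;> simp; ring
  map_smul' c v := by ext <;> simp; ring
  left_inv v := by simp
  right_inv v := by simp

/-- Since the isomorphisms allowed in `CohomE` are the shears, cohomology of the structures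
`stdStr` is a relation between their structure constants. -/
theorem cohomE_stdStr (ε θ a b u μ θ' a' b' u' μ' : k) :
    CohomE (stdStr ε θ a b u μ) (stdStr ε θ' a' b' u' μ') ↔
      ∃ r : k, θ + r * ε = θ' + r * (a' + b') + r * r * u' ∧
        a = a' + r * u' ∧ b = b' + r * u' ∧ u = u' ∧ μ = μ' := by
  constructor
  · rintro ⟨φ, hm, hb, hV, hP⟩
    have hφ : ∀ p x : k, φ (p, x) = (p, x + (φ (1, 0)).2 * p) := by
      intro p x
      have e : ((p, x) : k × k) = p • ((1, 0) : k × k) + (0, x) := by ext <;> simp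
      ext
      · exact hP _
      · rw [e, map_add, map_smul, hV]
        simp only [Prod.snd_add, Prod.smul_snd, smul_eq_mul]
        ring
    generalize (φ (1, 0)).2 = r at hφ
    have m11 := congrArg Prod.snd (hm (1, 0) (1, 0))
    have m12 := congrArg Prod.snd (hm (1, 0) (0, 1))
    have m21 := congrArg Prod.snd (hm (0, 1) (1, 0))
    have m22 := congrArg Prod.snd (hm (0, 1) (0, 1))
    have b12 := congrArg Prod.snd (hb (1, 0) (0, 1))
    simp [stdStr, hφ] at m11 m12 m21 m22 b12
    exact ⟨r, by linear_combination m11, by linear_combination m12, by linear_combination m21,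
      m22, b12⟩
  · rintro ⟨r, h1, rfl, rfl, rfl, rfl⟩
    refine ⟨shear r, ?_, ?_, ?_, ?_⟩
    · intro v w
      ext
      · simp [stdStr, shear]
      · simp [stdStr, shear]
        linear_combination (v.1 * w.1) * h1
    · intro v w
      ext <;> simp [stdStr, shear]; ring_nf; simp
    · intro c
      simp [shear]
    · intro v
      simp [shear]

end Std

theorem cohomE_equivalence {k : Type u} [Field k] :
    Equivalence (CohomE (k := k) (P := k)) where
  refl s := ⟨LinearEquiv.refl k _, by simp, by simp, by simp, by simp⟩
  symm := by
    rintro s t ⟨φ, hm, hb, hV, hP⟩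
    refine ⟨φ.symm, ?_, ?_, ?_, ?_⟩
    · intro v w
      rw [LinearEquiv.symm_apply_eq, hm]; simp
    · intro v w
      rw [LinearEquiv.symm_apply_eq, hb]; simp
    · intro c
      rw [LinearEquiv.symm_apply_eq, hV]
    · intro v
      rw [← hP]; simp
  trans := by
    rintro s t w ⟨φ, hm, hb, hV, hP⟩ ⟨ψ, hm', hb', hV', hP'⟩
    exact ⟨φ.trans ψ, by simp [hm, hm'], by simp [hb, hb'], by simp [hV, hV'],
      by simp [hP, hP']⟩

/-- A complete, irredundant family of representatives identifies the quotient by cohomology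
with the index set of the family. -/
theorem quot_equiv_of_representatives {k : Type u} [Field k] {I : Type u}
    (C : ((k × k → k × k → k × k) × (k × k → k × k → k × k)) → Prop)
    (model : I → ((k × k → k × k → k × k) × (k × k → k × k → k × k)))
    (hC : ∀ i, C (model i)) (hsurj : ∀ s, C s → ∃ i, CohomE s (model i))
    (hinj : ∀ i j, CohomE (model i) (model j) → i = j) :
    Nonempty (Quot (fun s t : {s : _ // C s} => CohomE s.1 t.1) ≃ I) := by
  have hE : Equivalence (fun s t : {s : _ // C s} => CohomE s.1 t.1) :=
    cohomE_equivalence.comap Subtype.val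
  refine ⟨(Equiv.ofBijective (fun i => Quot.mk _ ⟨model i, hC i⟩) ⟨?_, ?_⟩).symm⟩
  · intro i j h
    exact hinj i j ((hE.quot_mk_eq_iff _ _).1 h)
  · rintro ⟨s, hs⟩
    obtain ⟨i, hi⟩ := hsurj s hs
    exact ⟨i, ((hE.quot_mk_eq_iff _ _).2 hi).symm⟩

/-- Structure constants `(θ, a, b, u, μ)` of the models over `k₀`. -/
theorem model17a_eq (i : I17a k) : model17a k i = match i with
    | Sum.inl d => stdStr 0 d.1 0 0 0 0
    | Sum.inr (Sum.inl m) => stdStr 0 0 0 0 0 m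
    | Sum.inr (Sum.inr d) => stdStr 0 0 0 0 d.1 0 := by
  rcases i with d | m | d <;> simp [model17a, stdStr] <;> rfl

/-- Structure constants `(θ, a, b, u, μ)` of the models over `k₁`. -/
theorem model17b_eq (i : I17b k) : model17b k i = match i with
    | Sum.inl _ => stdStr 1 0 0 0 0 0
    | Sum.inr (Sum.inl _) => stdStr 1 0 1 1 0 0
    | Sum.inr (Sum.inr (Sum.inl m)) => stdStr 1 0 1 0 0 m
    | Sum.inr (Sum.inr (Sum.inr (Sum.inl m))) => stdStr 1 0 0 1 0 m
    | Sum.inr (Sum.inr (Sum.inr (Sum.inr d))) => stdStr 1 0 0 0 d.1 0 := by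
  rcases i with _ | _ | m | m | d <;> simp [model17b, stdStr] <;> rfl

theorem model17a_compat (i : I17a k) :
    CompatE (k := k) (fun _ _ : k => (0 : k)) (fun _ _ : k => (0 : k)) (model17a k i) := by
  rw [model17a_eq]
  rcases i with d | m | d <;>
    exact ⟨(isPoisson_stdStr _ _ _ _ _ _).2 (by simp), by simp [stdStr], by simp [stdStr]⟩

theorem model17b_compat (i : I17b k) :
    CompatE (k := k) (fun a b : k => a * b) (fun _ _ : k => (0 : k)) (model17b k i) := by
  rw [model17b_eq]
  rcases i with _ | _ | m | m | d <;>
    exact ⟨(isPoisson_stdStr _ _ _ _ _ _).2 (by simp), by simp [stdStr], by simp [stdStr]⟩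

theorem model17a_complete (s : (k × k → k × k → k × k) × (k × k → k × k → k × k))
    (hs : CompatE (k := k) (fun _ _ : k => (0 : k)) (fun _ _ : k => (0 : k)) s) :
    ∃ i : I17a k, CohomE s (model17a k i) := by
  simp only [model17a_eq]
  obtain ⟨θ, a, b, u, μ, rfl⟩ := exists_eq_stdStr 0 s (by simpa using hs)
  obtain ⟨h1, h2, h3, h4, h5, h6, h7⟩ := (isPoisson_stdStr _ _ _ _ _ _).1 hs.1
  by_cases hu : u = 0
  · subst hu
    have ha : a = 0 := by simpa using h3.symm
    have hb : b = 0 := by simpa using h4.symm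
    subst ha hb
    by_cases hθ : θ = 0
    · refine ⟨Sum.inr (Sum.inl μ), ?_⟩
      exact (cohomE_stdStr ..).2 ⟨0, by simp [hθ]⟩
    · have hμ : μ = 0 := by simpa [hθ] using h6
      refine ⟨Sum.inl ⟨θ, hθ⟩, ?_⟩
      exact (cohomE_stdStr ..).2 ⟨0, by simp [hμ]⟩
  · have hμ : μ = 0 := by simpa [hu] using h7
    have hab : a = b := mul_right_cancel₀ hu h2
    subst hab
    refine ⟨Sum.inr (Sum.inr ⟨u, hu⟩), ?_⟩
    refine (cohomE_stdStr ..).2 ⟨a / u, ?_, ?_, ?_, rfl, hμ⟩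
    · field_simp
      linear_combination h3
    · field_simp; simp
    · field_simp; simp

theorem model17b_complete (s : (k × k → k × k → k × k) × (k × k → k × k → k × k))
    (hs : CompatE (k := k) (fun a b : k => a * b) (fun _ _ : k => (0 : k)) s) :
    ∃ i : I17b k, CohomE s (model17b k i) := by
  simp only [model17b_eq]
  obtain ⟨θ, a, b, u, μ, rfl⟩ := exists_eq_stdStr 1 s (by simpa using hs)
  obtain ⟨h1, h2, h3, h4, h5, h6, h7⟩ := (isPoisson_stdStr _ _ _ _ _ _).1 hs.1
  by_cases hu : u = 0
  · subst hu
    have ha : a = 0 ∨ a = 1 := by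
      rcases eq_or_ne a 0 with h | h
      · exact Or.inl h
      · exact Or.inr (mul_right_cancel₀ h (by linear_combination -h3))
    have hb : b = 0 ∨ b = 1 := by
      rcases eq_or_ne b 0 with h | h
      · exact Or.inl h
      · exact Or.inr (mul_right_cancel₀ h (by linear_combination -h4))
    rcases ha with rfl | rfl <;> rcases hb with rfl | rfl
    · refine ⟨Sum.inl PUnit.unit, ?_⟩
      refine (cohomE_stdStr ..).2 ⟨-θ, by ring, by ring, by ring, rfl, by simpa using h5⟩
    · have hθ : θ = 0 := by simpa using h1.symm
      refine ⟨Sum.inr (Sum.inr (Sum.inr (Sum.inl μ))), ?_⟩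
      exact (cohomE_stdStr ..).2 ⟨0, by simp [hθ]⟩
    · have hθ : θ = 0 := by simpa using h1
      refine ⟨Sum.inr (Sum.inr (Sum.inl μ)), ?_⟩
      exact (cohomE_stdStr ..).2 ⟨0, by simp [hθ]⟩
    · refine ⟨Sum.inr (Sum.inl PUnit.unit), ?_⟩
      refine (cohomE_stdStr ..).2 ⟨θ, by ring, by ring, by ring, rfl, by linear_combination -h5⟩
  · have hμ : μ = 0 := by simpa [hu] using h7
    have hab : a = b := mul_right_cancel₀ hu h2
    subst hab
    refine ⟨Sum.inr (Sum.inr (Sum.inr (Sum.inr ⟨u, hu⟩))), ?_⟩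
    refine (cohomE_stdStr ..).2 ⟨a / u, ?_, ?_, ?_, rfl, hμ⟩
    · field_simp
      linear_combination h3
    · field_simp; simp
    · field_simp; simp

theorem model17a_irredundant (i j : I17a k) (h : CohomE (model17a k i) (model17a k j)) :
    i = j := by
  rw [model17a_eq, model17a_eq] at h
  rcases i with ⟨d, hd⟩ | m | ⟨d, hd⟩ <;> rcases j with ⟨d', hd'⟩ | m' | ⟨d', hd'⟩ <;>
    obtain ⟨r, h1, h2, h3, h4, h5⟩ := (cohomE_stdStr ..).1 h <;> grind

theorem model17b_irredundant (i j : I17b k) (h : CohomE (model17b k i) (model17b k j)) :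
    i = j := by
  rw [model17b_eq, model17b_eq] at h
  rcases i with _ | _ | m | m | ⟨d, hd⟩ <;> rcases j with _ | _ | m' | m' | ⟨d', hd'⟩ <;>
    obtain ⟨r, h1, h2, h3, h4, h5⟩ := (cohomE_stdStr ..).1 h <;> grind

/-- **Corollary 3.6.**  `GPH²(k₀, k) ≅ k* ⊔ k ⊔ k*` and
`GPH²(k₁, k) ≅ {*} ⊔ {*} ⊔ k ⊔ k ⊔ k*`: every `2`-dimensional co-flag Poisson algebra is
cohomologous to exactly one of the algebras `k²_{0,δ}`, `ₘk²₀`, `k²_{0,u}`, `k²₁`, `k̄²₁`,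
`ₘk²₁`, `ₘk̄²₁`, `k²_u`. -/
theorem statement17 :
    -- the case P = k₀
    Nonempty
      (Quot (fun s t : {s : _ // CompatE (k := k)
            (fun _ _ : k => (0 : k)) (fun _ _ : k => (0 : k)) s} =>
          CohomE s.1 t.1) ≃ I17a k) ∧
    (∀ i : I17a k, IsPoisson k (model17a k i).1 (model17a k i).2) ∧
    (∀ s, CompatE (k := k) (fun _ _ : k => (0 : k)) (fun _ _ : k => (0 : k)) s →
        ∃ i : I17a k, CohomE s (model17a k i)) ∧
    (∀ i j : I17a k, CohomE (model17a k i) (model17a k j) → i = j) ∧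
    -- the case P = k₁
    Nonempty
      (Quot (fun s t : {s : _ // CompatE (k := k)
            (fun a b : k => a * b) (fun _ _ : k => (0 : k)) s} =>
          CohomE s.1 t.1) ≃ I17b k) ∧
    (∀ i : I17b k, IsPoisson k (model17b k i).1 (model17b k i).2) ∧
    (∀ s, CompatE (k := k) (fun a b : k => a * b) (fun _ _ : k => (0 : k)) s →
        ∃ i : I17b k, CohomE s (model17b k i)) ∧
    (∀ i j : I17b k, CohomE (model17b k i) (model17b k j) → i = j) := by
  exact ⟨quot_equiv_of_representatives _ (model17a k) (model17a_compat k) (model17a_complete k)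
      (model17a_irredundant k),
    fun i => (model17a_compat k i).1, model17a_complete k, model17a_irredundant k,
    quot_equiv_of_representatives _ (model17b k) (model17b_compat k) (model17b_complete k)
      (model17b_irredundant k),
    fun i => (model17b_compat k i).1, model17b_complete k, model17b_irredundant k⟩


end Statement
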